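/- Let $F \in \mathbb{R}^{M\times N}$ have rank $N$, with $M > N$ and $M \ge 3$, and suppose that the rows of $F$ (the frame vectors) are not all equal; this is automatic when $N \ge 2$. Let $F^\dagger = (F^*F)^{-1}F^*$ be the pseudo-inverse of $F$. For a composition $m = (m_1,\dots,m_K)$ of $M$ (positive integers with sum $M$), let $I_1,\dots,I_K$ be the consecutive blocks of indices of $\{1,\dots,M\}$ of sizes $m_1,\dots,m_K$, and call $z\in\mathbb{R}^M$ $m$-descending if $z_k \ge z_\ell$ whenever $k\in I_i$ and $\ell\in I_{i+1}$ for some $1\le i<K$. A Variant I initial codeword compatible with $m$ is a vector $\hat y_{\mathrm{init}} = (\mu_1,\dots,\mu_1,\dots,\mu_K,\dots,\mu_K)$ in which $\mu_i$ appears $m_i$ times and $\mu_1>\dots>\mu_K$ are real. A Variant I frame permutation quantization (FPQ) encoding of $x\in\mathbb{R}^N$ is any $M\times M$ permutation matrix $P$ such that $PFx$ is $m$-descending (there may be several if $Fx$ has ties); its canonical reconstruction is $\hat x = F^\dagger P^{-1}\hat y_{\mathrm{init}}$. Canonical reconstruction is consistent for $(m,\hat y_{\mathrm{init}})$ if, for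 every $x\in\mathbb{R}^N$ and every encoding $P$ of $x$, the vector $PF\hat x$ is $m$-descending. Then canonical reconstruction is consistent for every composition $m$ of $M$ and every Variant I initial codeword $\hat y_{\mathrm{init}}$ compatible with $m$ if and only if $M = N+1$ and $FF^\dagger = I_M - \frac1M J_M$, where $J_M$ is the $M\times M$ all-ones matrix. -/

import Mathlib

/-- The differencing matrix `D(m)` of a composition `m` of `M`: its rows are indexed by the pairs
`(k, ℓ)` with `k` in some block and `ℓ` in the next block, and the row of `(k, ℓ)` is
`e_kᵀ - e_ℓᵀ`.  (`c.index k` is the number of the block that contains the index `k`.) -/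
def diffMatrix {M : ℕ} (c : Composition M) :
    Matrix {p : Fin M × Fin M // (c.index p.1 : ℕ) + 1 = (c.index p.2 : ℕ)} (Fin M) ℝ :=
  Matrix.of fun p => Pi.single p.1.1 1 - Pi.single p.1.2 1

/-- `z` is `m`-descending: `D(m) z ≥ 0` elementwise. -/
def IsDescending {M : ℕ} (c : Composition M) (z : Fin M → ℝ) : Prop :=
  ∀ p, 0 ≤ (diffMatrix c).mulVec z p

/-- `y` is a Variant I initial codeword compatible with the composition `m`:
`y = (μ₁, …, μ₁, …, μ_K, …, μ_K)` with `μ_i` repeated `m_i` times and `μ₁ > ⋯ > μ_K`. -/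
def IsVariantICodeword {M : ℕ} (c : Composition M) (y : Fin M → ℝ) : Prop :=
  ∃ μ : Fin c.length → ℝ, StrictAnti μ ∧ ∀ k, y k = μ (c.index k)

/-- The permutation matrix of `σ` is a Variant I FPQ encoding of `x` with frame `F` and
composition `m`: `P F x` is `m`-descending. If `F x` has ties, there may be several. -/
def IsVariantIEncoding {M N : ℕ} (F : Matrix (Fin M) (Fin N) ℝ) (c : Composition M)
    (x : Fin N → ℝ) (σ : Equiv.Perm (Fin M)) : Prop :=
  IsDescending c ((σ.permMatrix ℝ).mulVec (F.mulVec x))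

/-- The pseudo-inverse `F† = (F*F)⁻¹ F*` of a matrix `F` of full column rank. -/
noncomputable def pinv {M N : ℕ} (F : Matrix (Fin M) (Fin N) ℝ) :
    Matrix (Fin N) (Fin M) ℝ :=
  (F.transpose * F)⁻¹ * F.transpose

/-- The linear reconstruction `x̂ = R ŷ`, where `ŷ = P⁻¹ ŷ_init`. -/
noncomputable def linearReconstruction {M N : ℕ} (R : Matrix (Fin N) (Fin M) ℝ)
    (y : Fin M → ℝ) (σ : Equiv.Perm (Fin M)) : Fin N → ℝ :=
  R.mulVec ((σ.permMatrix ℝ)⁻¹.mulVec y)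

/-- The linear reconstruction `x̂ = R ŷ` is consistent with Variant I FPQ encoding using the frame
`F`, the composition `m` and the initial codeword `y`: `D(m) P F x̂ ≥ 0` for every `x` and every
encoding `P` of `x`. -/
def IsConsistent {M N : ℕ} (F : Matrix (Fin M) (Fin N) ℝ) (R : Matrix (Fin N) (Fin M) ℝ)
    (c : Composition M) (y : Fin M → ℝ) : Prop :=
  ∀ (x : Fin N → ℝ) (σ : Equiv.Perm (Fin M)), IsVariantIEncoding F c x σ →
    IsDescending c ((σ.permMatrix ℝ).mulVec (F.mulVec (linearReconstruction R y σ)))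

open Matrix

theorem isDescending_iff {M : ℕ} (c : Composition M) (z : Fin M → ℝ) :
    IsDescending c z ↔
      ∀ k l : Fin M, (c.index k : ℕ) + 1 = (c.index l : ℕ) → z l ≤ z k := by
  have hrow : ∀ p, (diffMatrix c *ᵥ z) p = z p.1.1 - z p.1.2 := fun p => by
    change (Pi.single p.1.1 1 - Pi.single p.1.2 1) ⬝ᵥ z = _
    rw [sub_dotProduct, single_one_dotProduct, single_one_dotProduct]
  simp only [IsDescending, hrow, sub_nonneg, Subtype.forall, Prod.forall]

theorem Composition.coe_index_ones {n : ℕ} (j : Fin n) :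
    ((Composition.ones n).index j : ℕ) = j := by
  have h₁ := (Composition.ones n).lt_sizeUpTo_index_succ j
  have h₂ := (Composition.ones n).sizeUpTo_index_le j
  have h₃ := ((Composition.ones n).index j).2.trans_eq (Composition.ones_length n)
  simp only [Composition.ones_sizeUpTo, Fin.val_succ] at h₁ h₂
  omega

theorem antitone_of_isDescending_ones {M : ℕ} {z : Fin M → ℝ}
    (h : IsDescending (Composition.ones M) z) : Antitone z := by
  rw [isDescending_iff] at h
  cases M with
  | zero => exact fun i => i.elim0
  | succ n =>
    refine Fin.antitone_iff_succ_le.2 fun i => h _ _ ?_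
    simp [Composition.coe_index_ones]

theorem isVariantICodeword_ones {M : ℕ} {y : Fin M → ℝ} (hy : StrictAnti y) :
    IsVariantICodeword (Composition.ones M) y := by
  refine ⟨fun i => y (Fin.cast (Composition.ones_length M) i), fun i j hij => hy hij, fun k => ?_⟩
  congr 1
  ext
  simp [Composition.coe_index_ones]

theorem inv_permMatrix_mulVec {M : ℕ} (σ : Equiv.Perm (Fin M)) (y : Fin M → ℝ) :
    (σ.permMatrix ℝ)⁻¹ *ᵥ y = y ∘ σ.symm := by
  have : (σ.permMatrix ℝ)⁻¹ = (σ⁻¹).permMatrix ℝ := by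
    apply Matrix.inv_eq_right_inv
    rw [← permMatrix_mul, inv_mul_cancel, permMatrix_one]
  rw [this, permMatrix_mulVec]
  rfl

theorem permMatrix_mulVec_reconstruction {M N : ℕ} (F : Matrix (Fin M) (Fin N) ℝ)
    (R : Matrix (Fin N) (Fin M) ℝ) (y : Fin M → ℝ) (σ : Equiv.Perm (Fin M)) :
    σ.permMatrix ℝ *ᵥ (F *ᵥ linearReconstruction R y σ) =
      ((F * R) *ᵥ (y ∘ σ.symm)) ∘ σ := by
  rw [permMatrix_mulVec, linearReconstruction, inv_permMatrix_mulVec, mulVec_mulVec]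

/-- `A` weakly preserves the order of the entries of every vector with distinct entries. -/
def PreservesEntryOrder {M : ℕ} (A : Matrix (Fin M) (Fin M) ℝ) : Prop :=
  ∀ z : Fin M → ℝ, Function.Injective z → ∀ k l, z l < z k → (A *ᵥ z) l ≤ (A *ᵥ z) k

/-- Every permutation encodes the zero vector, so consistency for the finest composition
already constrains all orderings of the entries. -/
theorem preservesEntryOrder_of_isConsistent {M N : ℕ} {F : Matrix (Fin M) (Fin N) ℝ}
    {R : Matrix (Fin N) (Fin M) ℝ}
    (h : ∀ y, IsVariantICodeword (Composition.ones M) y →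
      IsConsistent F R (Composition.ones M) y) :
    PreservesEntryOrder (F * R) := by
  intro z hz k l hlt
  obtain ⟨σ, hσ⟩ : ∃ σ : Equiv.Perm (Fin M), StrictAnti (z ∘ σ) := by
    refine ⟨Tuple.sort (-z), Antitone.strictAnti_of_injective ?_
      (hz.comp (Equiv.injective _))⟩
    intro i j hij
    simpa using Tuple.monotone_sort (-z) hij
  have hdesc := h (z ∘ σ) (isVariantICodeword_ones hσ) 0 σ
    ((isDescending_iff _ _).2 fun k l _ => by simp)
  rw [permMatrix_mulVec_reconstruction] at hdesc
  have hanti := antitone_of_isDescending_ones hdesc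
  have hz' : (z ∘ σ) ∘ σ.symm = z := by ext; simp
  rw [hz'] at hanti
  have hkl : σ.symm k < σ.symm l := hσ.lt_iff_gt.1 (by simpa using hlt)
  simpa using hanti hkl.le

theorem eq_zero_of_forall_nonneg_add_mul {C a T : ℝ}
    (h : ∀ t, T ≤ |t| → 0 ≤ C + t * a) : a = 0 := by
  by_contra ha
  set s := |T| + (|C| + 1) / |a| with hs
  have ha' : 0 < |a| := abs_pos.2 ha
  have hs0 : 0 ≤ s := by positivity
  have hTs : T ≤ |s| := by
    rw [abs_of_nonneg hs0]
    have : 0 ≤ (|C| + 1) / |a| := by positivity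
    linarith [le_abs_self T]
  have h₁ := h s hTs
  have h₂ := h (-s) (by rwa [abs_neg])
  have h₃ : |C| + 1 ≤ s * |a| := by
    rw [hs, add_mul, div_mul_cancel₀ _ ha'.ne']
    have : 0 ≤ |T| * |a| := by positivity
    linarith
  have hC := le_abs_self C
  rcases abs_cases a with ⟨h, _⟩ | ⟨h, _⟩ <;> rw [h] at h₃ <;> linarith

/-- The vector with entry `1` at `k`, entry `0` at `l`, and distinct larger entries elsewhere. -/
def pairProbe {M : ℕ} (k l i : Fin M) : ℝ :=
  if i = k then 1 else if i = l then 0 else (i : ℝ) + 2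

theorem pairProbe_injective {M : ℕ} (k l : Fin M) : Function.Injective (pairProbe k l) := by
  intro i j hij
  have hi : (0 : ℝ) ≤ (i : ℕ) := by positivity
  have hj : (0 : ℝ) ≤ (j : ℕ) := by positivity
  unfold pairProbe at hij
  split_ifs at hij with h₁ h₂ h₃ h₄ h₅ h₆ h₇ h₈
  all_goals first
    | (subst_vars; rfl)
    | (exfalso; linarith)
    | (apply Fin.ext; exact_mod_cast add_right_cancel hij)

theorem abs_pairProbe_lt {M : ℕ} (k l i : Fin M) : |pairProbe k l i| < (M : ℝ) + 2 := by
  have hi : ((i : ℕ) : ℝ) < M := by exact_mod_cast i.2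
  have hi' : (0 : ℝ) ≤ (i : ℕ) := by positivity
  unfold pairProbe
  split_ifs <;> rw [abs_of_nonneg] <;> linarith

theorem PreservesEntryOrder.apply_eq {M : ℕ} {A : Matrix (Fin M) (Fin M) ℝ}
    (hA : PreservesEntryOrder A) {k l j : Fin M} (hkl : k ≠ l) (hjk : j ≠ k) (hjl : j ≠ l) :
    A k j = A l j := by
  have key : A k j - A l j = 0 := by
    refine eq_zero_of_forall_nonneg_add_mul (T := (M : ℝ) + 2)
      (C := (A *ᵥ Function.update (pairProbe k l) j 0) k -
        (A *ᵥ Function.update (pairProbe k l) j 0) l) fun t ht => ?_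
    have hne : ∀ i, pairProbe k l i ≠ t := fun i hi =>
      absurd (abs_pairProbe_lt k l i) (by rw [hi]; exact not_lt.2 ht)
    have hinj : Function.Injective (Function.update (pairProbe k l) j t) := by
      intro a b hab
      by_cases ha : a = j <;> by_cases hb : b = j
      · rw [ha, hb]
      · subst ha
        rw [Function.update_self, Function.update_of_ne hb] at hab
        exact absurd hab.symm (hne b)
      · subst hb
        rw [Function.update_self, Function.update_of_ne ha] at hab
        exact absurd hab (hne a)
      · rw [Function.update_of_ne ha, Function.update_of_ne hb] at hab
        exact pairProbe_injective k l hab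
    have hord := hA _ hinj k l (by
      rw [Function.update_of_ne hjk.symm, Function.update_of_ne hjl.symm]
      simp [pairProbe, hkl.symm])
    have hsplit : Function.update (pairProbe k l) j t =
        Function.update (pairProbe k l) j 0 + t • Pi.single j 1 := by
      ext i
      by_cases hi : i = j
      · subst hi; simp
      · simp [hi]
    rw [hsplit, mulVec_add, mulVec_smul, mulVec_single_one] at hord
    simp only [Pi.add_apply, Pi.smul_apply, col_apply, smul_eq_mul] at hord
    linarith
  linarith

theorem PreservesEntryOrder.sum_row_eq {M : ℕ} {A : Matrix (Fin M) (Fin M) ℝ}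
    (hA : PreservesEntryOrder A) {k l : Fin M} (hkl : k ≠ l) :
    ∑ j, A k j = ∑ j, A l j := by
  have key : ∑ j, A k j - ∑ j, A l j = 0 := by
    refine eq_zero_of_forall_nonneg_add_mul (T := 0)
      (C := (A *ᵥ pairProbe k l) k - (A *ᵥ pairProbe k l) l) fun t _ => ?_
    have hone : ∀ i, (A *ᵥ 1) i = ∑ j, A i j := fun i => by simp [mulVec, dotProduct]
    have hord := hA (pairProbe k l + t • 1)
      (fun a b hab => pairProbe_injective k l (by simpa using hab)) k l
      (by simp [pairProbe, hkl.symm])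
    rw [mulVec_add, mulVec_smul] at hord
    simp only [Pi.add_apply, Pi.smul_apply, smul_eq_mul, hone] at hord
    linarith
  linarith

theorem PreservesEntryOrder.exists_eq_smul_one_add {M : ℕ} (hM : 3 ≤ M)
    {A : Matrix (Fin M) (Fin M) ℝ} (hA : PreservesEntryOrder A) (hsymm : Aᵀ = A) :
    ∃ a b : ℝ, A = a • (1 : Matrix (Fin M) (Fin M) ℝ) + b • Matrix.of fun _ _ => 1 := by
  have hs : ∀ i j, A i j = A j i := fun i j => congrFun (congrFun hsymm j) i
  have hdiag : ∀ k l, A k k = A l l := by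
    intro k l
    by_cases hkl : k = l
    · rw [hkl]
    have hsum : ∑ j, (A k j - A l j) = 0 := by
      rw [Finset.sum_sub_distrib, hA.sum_row_eq hkl, sub_self]
    rw [Fintype.sum_eq_add k l hkl fun j hj => by
      rw [hA.apply_eq hkl hj.1 hj.2, sub_self]] at hsum
    linarith [hs k l]
  let p : Fin M := ⟨0, by omega⟩
  let q : Fin M := ⟨1, by omega⟩
  have hpq : p ≠ q := by simp [p, q, Fin.ext_iff]
  have hoff : ∀ i j, i ≠ j → A i j = A p q := by
    intro i j hij
    by_cases hj : j = q
    · subst hj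
      by_cases hi : i = p
      · rw [hi]
      · exact hA.apply_eq hi hij.symm hpq.symm
    by_cases hip : i = p
    · subst hip
      rw [hs p j, hs p q]
      exact hA.apply_eq hj hij hpq
    by_cases hjp : j = p
    · subst hjp
      by_cases hi : i = q
      · subst hi; exact hs _ _
      · rw [hA.apply_eq hi hij.symm hpq, hs]
    · rw [hA.apply_eq hip (Ne.symm hij) hjp, hs p j, hs p q]
      exact hA.apply_eq hj (Ne.symm hjp) hpq
  refine ⟨A p p - A p q, A p q, ?_⟩
  ext i j
  by_cases hij : i = j
  · subst hij
    simp [hdiag i p]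
  · simp [hij, hoff i j hij]

theorem pinv_mul_self {M N : ℕ} {F : Matrix (Fin M) (Fin N) ℝ} (hF : F.rank = N) :
    pinv F * F = 1 := by
  have hli : LinearIndependent ℝ (Fᵀ * F).row := by
    rw [linearIndependent_iff_card_eq_finrank_span, Set.finrank, ← rank_eq_finrank_span_row,
      rank_transpose_mul_self, hF, Fintype.card_fin]
  have hu := (isUnit_iff_isUnit_det _).1 (linearIndependent_rows_iff_isUnit.1 hli)
  rw [pinv, Matrix.mul_assoc, nonsing_inv_mul _ hu]

theorem transpose_mul_pinv {M N : ℕ} (F : Matrix (Fin M) (Fin N) ℝ) :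
    (F * pinv F)ᵀ = F * pinv F := by
  simp only [pinv, transpose_mul, transpose_transpose, transpose_nonsing_inv, Matrix.mul_assoc]

theorem trace_mul_pinv {M N : ℕ} {F : Matrix (Fin M) (Fin N) ℝ} (hF : F.rank = N) :
    (F * pinv F).trace = N := by
  rw [trace_mul_comm, pinv_mul_self hF, trace_one, Fintype.card_fin]

/-- If `F F† = I - J/M`, then `F x̂` is `ŷ` minus its mean, which has the same ordering. -/
theorem isConsistent_of_mul_eq {M N : ℕ} {F : Matrix (Fin M) (Fin N) ℝ}
    {R : Matrix (Fin N) (Fin M) ℝ}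
    (h : F * R = 1 - (1 / (M : ℝ)) • Matrix.of (fun _ _ : Fin M => (1 : ℝ)))
    {c : Composition M} {y : Fin M → ℝ} (hy : IsVariantICodeword c y) :
    IsConsistent F R c y := by
  obtain ⟨μ, hμ, hyμ⟩ := hy
  intro x σ _
  rw [permMatrix_mulVec_reconstruction, h, isDescending_iff]
  intro k l hkl
  have hJ : ∀ i j, ((Matrix.of fun _ _ : Fin M => (1 : ℝ)) *ᵥ (y ∘ σ.symm)) i =
      ((Matrix.of fun _ _ : Fin M => (1 : ℝ)) *ᵥ (y ∘ σ.symm)) j := fun _ _ => rfl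
  have hlt : c.index k < c.index l := by
    rw [Fin.lt_def]; omega
  simp only [Function.comp_apply, sub_mulVec, one_mulVec, smul_mulVec, Pi.sub_apply,
    Pi.smul_apply, hJ (σ l) (σ k), Equiv.symm_apply_apply]
  rw [hyμ k, hyμ l]
  linarith [hμ hlt]

theorem stmt9 {M N : ℕ} (hM : 3 ≤ M) (hNM : N < M)
    (F : Matrix (Fin M) (Fin N) ℝ) (hF : F.rank = N)
    (hne : ∃ k ℓ : Fin M, F.row k ≠ F.row ℓ) :
    (∀ (c : Composition M) (y : Fin M → ℝ), IsVariantICodeword c y →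
      IsConsistent F (pinv F) c y) ↔
    (M = N + 1 ∧
      F * pinv F = 1 - (1 / (M : ℝ)) • Matrix.of (fun _ _ : Fin M => (1 : ℝ))) := by
  refine ⟨fun h => ?_, fun h c y hy => isConsistent_of_mul_eq h.2 hy⟩
  obtain ⟨a, b, hab⟩ := (preservesEntryOrder_of_isConsistent
    (h (Composition.ones M))).exists_eq_smul_one_add hM (transpose_mul_pinv F)
  have hM0 : (M : ℝ) ≠ 0 := by positivity
  have hfix : F * pinv F * F = F := by
    rw [Matrix.mul_assoc, pinv_mul_self hF, Matrix.mul_one]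
  have hidem : F * pinv F * (F * pinv F) = F * pinv F := by
    rw [← Matrix.mul_assoc, hfix]
  have htrace : M * (a + b) = N := by
    have := trace_mul_pinv hF
    rw [hab] at this
    simpa [trace, mul_add] using this
  have hab' : ∀ i j, (F * pinv F) i j = (if i = j then a else 0) + b := fun i j => by
    rw [hab]; simp [one_apply]
  obtain ⟨k, l, hkl⟩ := hne
  have ha0 : a ≠ 0 := by
    rintro rfl
    apply hkl
    ext j
    rw [row_apply, row_apply, ← hfix, mul_apply, mul_apply]
    simp [hab']
  have hne' : k ≠ l := fun e => hkl (by rw [e])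
  have hoff := congrFun (congrFun hidem k) l
  have hdiag := congrFun (congrFun hidem k) k
  simp only [mul_apply (M := F * pinv F), hab'] at hoff hdiag
  simp [add_mul, mul_add, Finset.sum_add_distrib, hne'] at hoff hdiag
  have ha : a = 1 := by
    have : a * (a - 1) = 0 := by linarith
    rcases mul_eq_zero.1 this with h | h
    · exact absurd h ha0
    · linarith
  subst ha
  have hb : b = -(1 / (M : ℝ)) := by
    have : b * (1 + M * b) = 0 := by linarith
    rcases mul_eq_zero.1 this with h | h
    · rw [h] at htrace
      have : (M : ℝ) = N := by linarith
      exact absurd (by exact_mod_cast this) hNM.ne'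
    · field_simp
      linarith
  refine ⟨?_, ?_⟩
  · rw [hb, mul_add, mul_neg, mul_one_div_cancel hM0] at htrace
    have : (M : ℝ) = N + 1 := by linarith
    exact_mod_cast this
  · rw [hab, hb, one_smul, neg_smul, sub_eq_add_neg]
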